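/- arXiv:2501.18231 — 9 statements merged into one kernel-verified Lean document; each statement's English description precedes it below -/
import Mathlib

section
/- Let (W, W', N, ∘, ε) be a residuated frame. Then the map γ : ℘(W) → ℘(W) defined by γ(X) := X^{▷◁} is a closure operator (X ⊆ γ(X), X ⊆ Y implies γ(X) ⊆ γ(Y), γ(γ(X)) = γ(X)), and moreover γ is a nucleus: for all X, Y ⊆ W, γ(X) ∘ γ(Y) ⊆ γ(X ∘ Y), where X ∘ Y := {x ∘ y | x ∈ X, y ∈ Y}. -/
/-! Residuated frames: the Galois closure `γ(X) = X^{▷◁}` is a closure operator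
and a nucleus. -/

namespace ResFrames

variable {W W' : Type*}

/-- `X^▷ = {z ∈ W' | ∀ x ∈ X, x N z}`. -/
def polR (N : W → W' → Prop) (X : Set W) : Set W' := {z | ∀ x ∈ X, N x z}

/-- `Y^◁ = {x ∈ W | ∀ z ∈ Y, x N z}`. -/
def polL (N : W → W' → Prop) (Y : Set W') : Set W := {x | ∀ z ∈ Y, N x z}

/-- `γ(X) = X^{▷◁}`. -/
def gam (N : W → W' → Prop) (X : Set W) : Set W := polL N (polR N X)

/-- `(W, W', N, ∘, ε)` is a residuated frame: `(W, ∘, ε)` is a monoid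
(given by the `Monoid W` instance) and `N` is nuclear, witnessed by the
operations `lres` (i.e. `x ⫽ z`) and `rres` (i.e. `z ⫻ y`). -/
structure IsResFrame [Monoid W] (N : W → W' → Prop)
    (lres : W → W' → W') (rres : W' → W → W') : Prop where
  nuclear_l : ∀ (x y : W) (z : W'), N (x * y) z ↔ N y (lres x z)
  nuclear_r : ∀ (x y : W) (z : W'), N (x * y) z ↔ N x (rres z y)

/-- in a residuated frame, `γ` is a closure operator and a nucleus:
`γ(X) ∘ γ(Y) ⊆ γ(X ∘ Y)` (pointwise product of sets). -/
theorem statement0 [Monoid W] (N : W → W' → Prop)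
    (lres : W → W' → W') (rres : W' → W → W')
    (hF : IsResFrame N lres rres) :
    (∀ X : Set W, X ⊆ gam N X) ∧
    (∀ X Y : Set W, X ⊆ Y → gam N X ⊆ gam N Y) ∧
    (∀ X : Set W, gam N (gam N X) = gam N X) ∧
    (∀ X Y : Set W,
      Set.image2 (· * ·) (gam N X) (gam N Y) ⊆ gam N (Set.image2 (· * ·) X Y)) := by
  refine ⟨fun X x hx z hz => hz x hx,
    fun X Y h x hx z hz => hx z fun w hw => hz w (h hw),
    fun X => Set.Subset.antisymm (fun x hx z hz => hx z fun w hw => hw z hz)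
      (fun x hx z hz => hz x hx), ?_⟩
  rintro X Y _ ⟨a, ha, b, hb, rfl⟩ z hz
  -- Residuating by `b` and then by `x ∈ X` moves one factor at a time into `W'`, where
  -- `a ∈ γ(X)` and `b ∈ γ(Y)` can be applied.
  refine (hF.nuclear_r a b z).2 (ha _ fun x hx => (hF.nuclear_r x b z).1 ?_)
  exact (hF.nuclear_l x b z).2
    (hb _ fun y hy => (hF.nuclear_l x y z).1 (hz _ (Set.mem_image2_of_mem hx hy)))

end ResFrames
end

section
/- Let (W, W', N, ∘, ε) be a residuated frame. Then its dual algebra W⁺ = (W⁺, ∩, ∪_γ, ∘_γ, \, /, γ({ε})) is a residuated lattice; moreover (W⁺, ⊆) is a complete lattice in which binary meet is intersection and binary join is X ∪_γ Y. -/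
/-! The dual algebra of a residuated frame is a (complete) residuated lattice. -/

/-! The map `γ` is the closure operator of the Galois connection `(▷, ◁)`, so closed sets form a
complete lattice under inclusion, with joins `γ(⋃₀ S)`. Nuclearity enters through one fact: a
residual `X \ Y` or `Y / X` into a closed set `Y` is closed, because `x * w` is `N`-below `z`
exactly when `w` is `N`-below `x ⫽ z`. Hence (`mul_mem_of_gam`) an inclusion `A * B ⊆ Z` with `Z`
closed extends to `γ(A) * γ(B) ⊆ Z`, which is the nucleus property of `γ`; associativity and the
unit laws of `∘_γ` follow from those of the monoid. -/

namespace ResFrames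

variable {W W' : Type*}

/-- `X` is Galois-closed, i.e. `X ∈ W⁺`. -/
def Closed (N : W → W' → Prop) (X : Set W) : Prop := gam N X = X

/-- `X ∘_γ Y  = γ({x∘y | x ∈ X, y ∈ Y})`. -/
def cmul [Monoid W] (N : W → W' → Prop) (X Y : Set W) : Set W :=
  gam N (Set.image2 (· * ·) X Y)

/-- `X ∪_γ Y = γ(X ∪ Y)`. -/
def cjoin (N : W → W' → Prop) (X Y : Set W) : Set W := gam N (X ∪ Y)

/-- `X \ Y = {w | ∀ x ∈ X, x∘w ∈ Y}`. -/
def sld [Monoid W] (X Y : Set W) : Set W := {w | ∀ x ∈ X, x * w ∈ Y}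

/-- `Y / X = {w | ∀ x ∈ X, w∘x ∈ Y}`. -/
def srd [Monoid W] (Y X : Set W) : Set W := {w | ∀ x ∈ X, w * x ∈ Y}

/-- The unit `γ({ε})` of the dual algebra. -/
def cone [Monoid W] (N : W → W' → Prop) : Set W := gam N {1}

/-- The dual algebra `(W⁺, ∩, ∪_γ, ∘_γ, \, /, γ({ε}))` is a residuated lattice:
all operations map closed sets to closed sets, `∩`/`∪_γ` are binary meet/join
with respect to `⊆`, `∘_γ` is a monoid operation with unit `γ({ε})`, and
`\`, `/` are its residuals. -/
def DualResLat [Monoid W] (N : W → W' → Prop) : Prop :=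
  (∀ X Y : Set W, Closed N X → Closed N Y → Closed N (X ∩ Y)) ∧
  (∀ X Y : Set W, Closed N (cjoin N X Y)) ∧
  (∀ X Y : Set W, Closed N (cmul N X Y)) ∧
  (∀ X Y : Set W, Closed N Y → Closed N (sld X Y)) ∧
  (∀ X Y : Set W, Closed N Y → Closed N (srd Y X)) ∧
  Closed N (cone N) ∧
  (∀ X Y : Set W, X ∩ Y ⊆ X) ∧
  (∀ X Y : Set W, X ∩ Y ⊆ Y) ∧
  (∀ X Y Z : Set W, Z ⊆ X → Z ⊆ Y → Z ⊆ X ∩ Y) ∧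
  (∀ X Y : Set W, X ⊆ cjoin N X Y) ∧
  (∀ X Y : Set W, Y ⊆ cjoin N X Y) ∧
  (∀ X Y Z : Set W, Closed N Z → X ⊆ Z → Y ⊆ Z → cjoin N X Y ⊆ Z) ∧
  (∀ X Y Z : Set W, Closed N X → Closed N Y → Closed N Z →
    cmul N (cmul N X Y) Z = cmul N X (cmul N Y Z)) ∧
  (∀ X : Set W, Closed N X → cmul N (cone N) X = X) ∧
  (∀ X : Set W, Closed N X → cmul N X (cone N) = X) ∧
  (∀ X Y Z : Set W, Closed N X → Closed N Y → Closed N Z →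
    (cmul N X Y ⊆ Z ↔ Y ⊆ sld X Z)) ∧
  (∀ X Y Z : Set W, Closed N X → Closed N Y → Closed N Z →
    (cmul N X Y ⊆ Z ↔ X ⊆ srd Z Y))

theorem subset_gam (N : W → W' → Prop) (X : Set W) : X ⊆ gam N X :=
  fun _ hx _ hz => hz _ hx

theorem gam_subset {N : W → W' → Prop} {X Z : Set W} (hZ : Closed N Z) (h : X ⊆ Z) :
    gam N X ⊆ Z := by
  intro w hw
  rw [← hZ]
  exact fun z hz => hw z fun x hx => hz x (h hx)

theorem closed_of_subset {N : W → W' → Prop} {X : Set W} (h : gam N X ⊆ X) : Closed N X :=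
  h.antisymm (subset_gam N X)

theorem closed_gam (N : W → W' → Prop) (X : Set W) : Closed N (gam N X) :=
  closed_of_subset fun _ hw z hz => hw z fun _ hx => hx z hz

section Frame

variable [Monoid W] {N : W → W' → Prop} {lres : W → W' → W'} {rres : W' → W → W'}

/-- The left residual of a closed set is closed: for `z` in `Y^▷` and `x` in `X`, the element
`lres x z` lies in `(X \ Y)^▷`. -/
theorem closed_sld (hF : IsResFrame N lres rres) (X : Set W) {Y : Set W} (hY : Closed N Y) :
    Closed N (sld X Y) := by
  refine closed_of_subset fun w hw x hx => ?_
  rw [← hY]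
  exact fun z hz => (hF.nuclear_l x w z).2 <|
    hw _ fun v hv => (hF.nuclear_l x v z).1 (hz _ (hv x hx))

theorem closed_srd (hF : IsResFrame N lres rres) (X : Set W) {Y : Set W} (hY : Closed N Y) :
    Closed N (srd Y X) := by
  refine closed_of_subset fun w hw x hx => ?_
  rw [← hY]
  exact fun z hz => (hF.nuclear_r w x z).2 <|
    hw _ fun v hv => (hF.nuclear_r v x z).1 (hz _ (hv x hx))

theorem cmul_subset_iff {X Y Z : Set W} (hZ : Closed N Z) :
    cmul N X Y ⊆ Z ↔ ∀ x ∈ X, ∀ y ∈ Y, x * y ∈ Z :=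
  ⟨fun h _ hx _ hy => h (subset_gam N _ (Set.mem_image2_of_mem hx hy)),
    fun h => gam_subset hZ (Set.image2_subset_iff.2 h)⟩

theorem mul_mem_cmul {X Y : Set W} {x y : W} (hx : x ∈ X) (hy : y ∈ Y) :
    x * y ∈ cmul N X Y :=
  subset_gam N _ (Set.mem_image2_of_mem hx hy)

/-- The nucleus property of `γ`: `γ(A) * γ(B) ⊆ Z` whenever `A * B ⊆ Z` and `Z` is closed.
It follows by passing to the residuals of `Z`, first in `B` and then in `A`. -/
theorem mul_mem_of_gam (hF : IsResFrame N lres rres) {A B Z : Set W} (hZ : Closed N Z)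
    (h : ∀ a ∈ A, ∀ b ∈ B, a * b ∈ Z) : ∀ a ∈ gam N A, ∀ b ∈ gam N B, a * b ∈ Z := by
  have h₁ : gam N B ⊆ sld A Z :=
    gam_subset (closed_sld hF A hZ) fun b hb a ha => h a ha b hb
  have h₂ : gam N A ⊆ srd Z (gam N B) :=
    gam_subset (closed_srd hF _ hZ) fun a ha b hb => h₁ hb a ha
  exact fun a ha b hb => h₂ ha b hb

theorem cmul_assoc (hF : IsResFrame N lres rres) {X Z : Set W} (Y : Set W)
    (hX : Closed N X) (hZ : Closed N Z) :
    cmul N (cmul N X Y) Z = cmul N X (cmul N Y Z) := by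
  apply Set.Subset.antisymm
  · refine (cmul_subset_iff (closed_gam N _)).2 ?_
    -- Writing `Z` as `γ(Z)` puts the product in the form handled by the nucleus property.
    rw [← hZ]
    refine mul_mem_of_gam hF (closed_gam N _) ?_
    rintro _ ⟨x, hx, y, hy, rfl⟩ z hz
    simp only [mul_assoc]
    exact mul_mem_cmul hx (mul_mem_cmul hy (hZ.symm ▸ hz))
  · refine (cmul_subset_iff (closed_gam N _)).2 ?_
    rw [← hX]
    refine mul_mem_of_gam hF (closed_gam N _) ?_
    rintro x hx _ ⟨y, hy, z, hz, rfl⟩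
    simp only [← mul_assoc]
    exact mul_mem_cmul (mul_mem_cmul (hX.symm ▸ hx) hy) hz

theorem cone_cmul (hF : IsResFrame N lres rres) {X : Set W} (hX : Closed N X) :
    cmul N (cone N) X = X := by
  apply Set.Subset.antisymm
  · refine (cmul_subset_iff hX).2 fun a ha b hb => ?_
    refine mul_mem_of_gam hF (A := {1}) (B := X) hX ?_ a ha b (subset_gam N X hb)
    rintro _ rfl x hx
    rwa [one_mul]
  · intro x hx
    have := mul_mem_cmul (N := N) (subset_gam N {1} rfl) hx
    rwa [one_mul] at this

theorem cmul_cone (hF : IsResFrame N lres rres) {X : Set W} (hX : Closed N X) :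
    cmul N X (cone N) = X := by
  apply Set.Subset.antisymm
  · refine (cmul_subset_iff hX).2 fun a ha b hb => ?_
    refine mul_mem_of_gam hF (A := X) (B := {1}) hX ?_ a (subset_gam N X ha) b hb
    rintro x hx _ rfl
    rwa [mul_one]
  · intro x hx
    have := mul_mem_cmul (N := N) hx (subset_gam N {1} rfl)
    rwa [mul_one] at this

end Frame

/-- the dual algebra of a residuated frame is a residuated
lattice, and `(W⁺, ⊆)` is a complete lattice (arbitrary suprema are given by
`γ(⋃₀ S)`) in which binary meet is intersection and binary join is `∪_γ`. -/
theorem statement1 [Monoid W] (N : W → W' → Prop)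
    (lres : W → W' → W') (rres : W' → W → W')
    (hF : IsResFrame N lres rres) :
    DualResLat N ∧
    (∀ S : Set (Set W),
      Closed N (gam N (⋃₀ S)) ∧
      (∀ X ∈ S, X ⊆ gam N (⋃₀ S)) ∧
      (∀ Z : Set W, Closed N Z → (∀ X ∈ S, X ⊆ Z) → gam N (⋃₀ S) ⊆ Z)) := by
  refine ⟨⟨?_, fun _ _ => closed_gam N _, fun _ _ => closed_gam N _,
    fun X _ hY => closed_sld hF X hY, fun X _ hY => closed_srd hF X hY, closed_gam N _,
    fun _ _ => Set.inter_subset_left, fun _ _ => Set.inter_subset_right,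
    fun _ _ _ => Set.subset_inter,
    fun X Y => Set.subset_union_left.trans (subset_gam N (X ∪ Y)),
    fun X Y => Set.subset_union_right.trans (subset_gam N (X ∪ Y)),
    fun _ _ _ hZ h₁ h₂ => gam_subset hZ (Set.union_subset h₁ h₂),
    fun _ Y _ hX _ hZ => cmul_assoc hF Y hX hZ,
    fun _ hX => cone_cmul hF hX, fun _ hX => cmul_cone hF hX, ?_, ?_⟩, ?_⟩
  · exact fun X Y hX hY => closed_of_subset <| Set.subset_inter
      (gam_subset hX Set.inter_subset_left) (gam_subset hY Set.inter_subset_right)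
  · intro X Y Z _ _ hZ
    rw [cmul_subset_iff hZ]
    exact ⟨fun h y hy x hx => h x hx y hy, fun h x hx y hy => h hy x hx⟩
  · intro X Y Z _ _ hZ
    rw [cmul_subset_iff hZ]
    exact ⟨fun h x hx y hy => h x hx y hy, fun h x hx y hy => h hx y hy⟩
  · exact fun S => ⟨closed_gam N _,
      fun X hX => (Set.subset_sUnion_of_mem hX).trans (subset_gam N _),
      fun Z hZ h => gam_subset hZ (Set.sUnion_subset h)⟩

end ResFrames
end

section
/- Let (W, A) be a cut-free *-Gentzen frame, a ∈ A, and Y ⊆ W an element of W⁺ with a ∈ Y ⊆ a^◁. Then a* ∈ γ(Y*) and γ(Y*) ⊆ (a*)^◁. In other words, F(a)^{*_γ} ⊆ F(a*), where F(b) := {X ∈ W⁺ | b ∈ X ⊆ b^◁}. -/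
/-! The star case of the quasimorphism lemma for cut-free *-Gentzen frames. -/

namespace ResFrames

variable {W W' A : Type*}

/-- `X*`: the set of all finite products of elements of `X`. -/
def starSet [Monoid W] (X : Set W) : Set W := (Submonoid.closure X : Set W)

/-- `X^{*γ} = γ(X*)`. -/
def cstar [Monoid W] (N : W → W' → Prop) (X : Set W) : Set W := gam N (starSet X)

/-- `Xⁿ`: the `n`-fold power of `X` with respect to `∘_γ`, with `X⁰ = γ({ε})`. -/
def gpow [Monoid W] (N : W → W' → Prop) (X : Set W) : ℕ → Set W
  | 0 => cone N
  | n + 1 => cmul N (gpow N X n) X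

/-- Operations of an algebra in the language `{∧, ∨, ·, \, /, *, 1, 0}`.
`ld a b` denotes `a \ b` and `rd a b` denotes `a / b`. -/
structure AOps (A : Type*) where
  meet : A → A → A
  join : A → A → A
  mul : A → A → A
  ld : A → A → A
  rd : A → A → A
  star : A → A
  one : A
  zero : A

/-- `(W, A)` is a cut-free `*`-Gentzen frame: a residuated frame with the
algebra `A` injected into `W` (via `i`) and into `W'` (via `i'`), generating
the monoid `W`, such that `N` satisfies all the (cut-free) Gentzen rules
together with the rules (0L), (*L), (*R₀), (*R₁). -/
structure IsStarGentzenCF [Monoid W] (N : W → W' → Prop)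
    (lres : W → W' → W') (rres : W' → W → W')
    (ops : AOps A) (i : A → W) (i' : A → W') extends
    IsResFrame N lres rres : Prop where
  i_inj : Function.Injective i
  i'_inj : Function.Injective i'
  gen : Submonoid.closure (Set.range i) = ⊤
  id_rule : ∀ a : A, N (i a) (i' a)
  ld_L : ∀ (x : W) (z : W') (a b : A),
    N x (i' a) → N (i b) z → N (i (ops.ld a b)) (lres x z)
  ld_R : ∀ (x : W) (a b : A), N x (lres (i a) (i' b)) → N x (i' (ops.ld a b))
  rd_L : ∀ (x : W) (z : W') (a b : A),
    N x (i' a) → N (i b) z → N (i (ops.rd b a)) (rres z x)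
  rd_R : ∀ (x : W) (a b : A), N x (rres (i' b) (i a)) → N x (i' (ops.rd b a))
  mul_L : ∀ (z : W') (a b : A), N (i a * i b) z → N (i (ops.mul a b)) z
  mul_R : ∀ (x y : W) (a b : A),
    N x (i' a) → N y (i' b) → N (x * y) (i' (ops.mul a b))
  meet_L₀ : ∀ (z : W') (a₀ a₁ : A), N (i a₀) z → N (i (ops.meet a₀ a₁)) z
  meet_L₁ : ∀ (z : W') (a₀ a₁ : A), N (i a₁) z → N (i (ops.meet a₀ a₁)) z
  meet_R : ∀ (x : W) (a b : A),
    N x (i' a) → N x (i' b) → N x (i' (ops.meet a b))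
  join_L : ∀ (z : W') (a b : A),
    N (i a) z → N (i b) z → N (i (ops.join a b)) z
  join_R₀ : ∀ (x : W) (a₀ a₁ : A), N x (i' a₀) → N x (i' (ops.join a₀ a₁))
  join_R₁ : ∀ (x : W) (a₀ a₁ : A), N x (i' a₁) → N x (i' (ops.join a₀ a₁))
  one_L : ∀ z : W', N 1 z → N (i ops.one) z
  one_R : N 1 (i' ops.one)
  zero_L : ∀ (x : W) (z : W'), N x (i' ops.zero) → N x z
  star_L : ∀ (z : W') (a : A), (∀ n : ℕ, N (i a ^ n) z) → N (i (ops.star a)) z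
  star_R₀ : ∀ a : A, N 1 (i' (ops.star a))
  star_R₁ : ∀ (x y : W) (a : A),
    N x (i' a) → N y (i' (ops.star a)) → N (x * y) (i' (ops.star a))

/-- A `*`-Gentzen frame: additionally satisfies (Cut). -/
structure IsStarGentzen [Monoid W] (N : W → W' → Prop)
    (lres : W → W' → W') (rres : W' → W → W')
    (ops : AOps A) (i : A → W) (i' : A → W') extends
    IsStarGentzenCF N lres rres ops i i' : Prop where
  cut : ∀ (x : W) (z : W') (a : A), N x (i' a) → N (i a) z → N x z

/-- let `(W, A)` be a cut-free `*`-Gentzen frame, `a ∈ A`, and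
`Y ∈ W⁺` with `a ∈ Y ⊆ a^◁`. Then `a* ∈ γ(Y*)` and `γ(Y*) ⊆ (a*)^◁`;
i.e. `γ(Y*) ∈ F(a*)` where `F(b) = {X ∈ W⁺ | b ∈ X ⊆ b^◁}`. -/
theorem statement5 [Monoid W] (N : W → W' → Prop)
    (lres : W → W' → W') (rres : W' → W → W')
    (ops : AOps A) (i : A → W) (i' : A → W')
    (hG : IsStarGentzenCF N lres rres ops i i')
    (a : A) (Y : Set W) (hY : Closed N Y)
    (haY : i a ∈ Y) (hYa : Y ⊆ polL N {i' a}) :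
    i (ops.star a) ∈ cstar N Y ∧ cstar N Y ⊆ polL N {i' (ops.star a)} := by
  constructor
  · intro z hz
    exact hG.star_L z a fun n => hz _ (pow_mem (Submonoid.subset_closure haY) n)
  · -- It suffices that `Y* ⊆ (a*)^◁`: the right-hand side is Galois-closed.
    rintro w hw _ rfl
    refine hw _ fun x hx => ?_
    -- (*R₁) prepends a factor, so the induction peels products from the left.
    induction hx using Submonoid.closure_induction_left with
    | one => exact hG.star_R₀ a
    | mul_left y hy x _ ih => exact hG.star_R₁ y x a (hYa hy _ rfl) ih

end ResFrames
end

section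
/- Let (W, A) be a *-Gentzen frame (i.e., satisfying the rule (Cut): x N a and a N z imply x N z, in addition to all cut-free *-Gentzen frame rules). Then the map f : A → W⁺, f(a) := a^◁, is well-defined (a^◁ ∈ W⁺, indeed a^{▷◁} = a^◁) and is a homomorphism from A to the dual algebra W⁺ preserving ∧, ∨, ·, \, /, *, 0 and 1. Moreover, if N restricted to A × A is antisymmetric, then f is injective, hence an embedding. -/
/-!
By (Cut), `a^◁ ⊆ γ(X)` whenever `i a` is related to all of `X^▷`; conversely `γ(X) ⊆ a^◁` as
soon as `X ⊆ a^◁` (`gam_subset_polL`). For join, product, star and unit, where the operation of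
the dual algebra is a closure `γ(X)`, the left Gentzen rule gives the first inclusion, tested on
the elements `i a ∈ a^◁` supplied by (Id), and the right rule gives the second. For meet and the
residuals, whose operations in the dual algebra need no closure, the right rule gives `⊇`, while
`⊆` is the left rule applied to (Id) and followed by (Cut). Injectivity is immediate from
`i a ∈ a^◁`.
-/

/-! For a *-Gentzen frame (with Cut), a ↦ a^◁ is a homomorphism into the dual algebra. -/

namespace ResFrames

variable {W W' A : Type*}

theorem mem_polL_singleton {N : W → W' → Prop} {x : W} {z : W'} :
    x ∈ polL N {z} ↔ N x z := by
  simp [polL]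

/-- Sets of the form `Y^◁` are closed, so `γ(X)` lies below any of them that contains `X`. -/
theorem gam_subset_polL {N : W → W' → Prop} {X : Set W} {Y : Set W'} (h : X ⊆ polL N Y) :
    gam N X ⊆ polL N Y :=
  fun _ hx z hz => hx z fun _ hy => h hy z hz

/-- let `(W, A)` be a `*`-Gentzen frame (satisfying Cut). Then
the map `f : A → W⁺`, `f(a) = a^◁`, is well defined (`a^{▷◁} = a^◁`, a closed
set), is a homomorphism with respect to `∧, ∨, ·, \, /, *, 0, 1`, and is
injective whenever `N` restricted to `A × A` is antisymmetric. -/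
theorem statement7 [Monoid W] (N : W → W' → Prop)
    (lres : W → W' → W') (rres : W' → W → W')
    (ops : AOps A) (i : A → W) (i' : A → W')
    (hG : IsStarGentzen N lres rres ops i i') :
    -- well-definedness: `a^{▷◁} = a^◁ ∈ W⁺`
    (∀ a : A, gam N {i a} = polL N {i' a}) ∧
    (∀ a : A, Closed N (polL N {i' a})) ∧
    -- homomorphism
    (∀ a b : A, polL N {i' (ops.meet a b)} = polL N {i' a} ∩ polL N {i' b}) ∧
    (∀ a b : A, polL N {i' (ops.join a b)} = cjoin N (polL N {i' a}) (polL N {i' b})) ∧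
    (∀ a b : A, polL N {i' (ops.mul a b)} = cmul N (polL N {i' a}) (polL N {i' b})) ∧
    (∀ a b : A, polL N {i' (ops.ld a b)} = sld (polL N {i' a}) (polL N {i' b})) ∧
    (∀ a b : A, polL N {i' (ops.rd a b)} = srd (polL N {i' a}) (polL N {i' b})) ∧
    (∀ a : A, polL N {i' (ops.star a)} = cstar N (polL N {i' a})) ∧
    (polL N {i' ops.one} = cone N) ∧
    -- injectivity under antisymmetry of `N` on `A × A`
    ((∀ a b : A, N (i a) (i' b) → N (i b) (i' a) → a = b) →
      Function.Injective fun a : A => polL N {i' a}) := by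
  have hN := hG.toIsStarGentzenCF
  -- `f a` contains `i a`, and by (Cut) it is contained in any `γ(X)` as soon as `i a` is
  have id' : ∀ a, i a ∈ polL N {i' a} := fun a => mem_polL_singleton.2 (hN.id_rule a)
  have below : ∀ (a : A) (X : Set W), (∀ z ∈ polR N X, N (i a) z) →
      polL N {i' a} ⊆ gam N X := fun a X h x hx z hz =>
    hG.cut x z a (mem_polL_singleton.1 hx) (h z hz)
  refine ⟨fun a => ?_, fun a => ?_, fun a b => ?_, fun a b => ?_, fun a b => ?_, fun a b => ?_,
    fun a b => ?_, fun a => ?_, ?_, fun hanti a b hab => ?_⟩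
  · exact (gam_subset_polL (Set.singleton_subset_iff.2 (id' a))).antisymm
      (below a _ fun z hz => hz _ rfl)
  · exact (gam_subset_polL subset_rfl).antisymm (below a _ fun z hz => hz _ (id' a))
  · ext x
    simp only [Set.mem_inter_iff, mem_polL_singleton]
    exact ⟨fun h => ⟨hG.cut x _ _ h (hN.meet_L₀ _ a b (hN.id_rule a)),
      hG.cut x _ _ h (hN.meet_L₁ _ a b (hN.id_rule b))⟩, fun h => hN.meet_R x a b h.1 h.2⟩
  · refine (below _ _ fun z hz => ?_).antisymm (gam_subset_polL ?_)
    · exact hN.join_L z a b (hz _ (Or.inl (id' a))) (hz _ (Or.inr (id' b)))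
    · rintro x (hx | hx)
      · exact mem_polL_singleton.2 (hN.join_R₀ x a b (mem_polL_singleton.1 hx))
      · exact mem_polL_singleton.2 (hN.join_R₁ x a b (mem_polL_singleton.1 hx))
  · refine (below _ _ fun z hz => ?_).antisymm (gam_subset_polL ?_)
    · exact hN.mul_L z a b (hz _ (Set.mem_image2_of_mem (id' a) (id' b)))
    · rintro _ ⟨x, hx, y, hy, rfl⟩
      exact mem_polL_singleton.2
        (hN.mul_R x y a b (mem_polL_singleton.1 hx) (mem_polL_singleton.1 hy))
  · ext x
    refine ⟨fun hx y hy => mem_polL_singleton.2 ((hN.nuclear_l _ _ _).2 ?_), fun hx => ?_⟩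
    · exact hG.cut x _ _ (mem_polL_singleton.1 hx)
        (hN.ld_L y _ a b (mem_polL_singleton.1 hy) (hN.id_rule b))
    · exact mem_polL_singleton.2
        (hN.ld_R x a b ((hN.nuclear_l _ _ _).1 (mem_polL_singleton.1 (hx _ (id' a)))))
  · ext x
    refine ⟨fun hx y hy => mem_polL_singleton.2 ((hN.nuclear_r _ _ _).2 ?_), fun hx => ?_⟩
    · exact hG.cut x _ _ (mem_polL_singleton.1 hx)
        (hN.rd_L y _ b a (mem_polL_singleton.1 hy) (hN.id_rule a))
    · exact mem_polL_singleton.2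
        (hN.rd_R x b a ((hN.nuclear_r _ _ _).1 (mem_polL_singleton.1 (hx _ (id' b)))))
  · refine (below _ _ fun z hz => ?_).antisymm (gam_subset_polL fun x hx => ?_)
    · exact hN.star_L z a fun n => hz _ (pow_mem (Submonoid.subset_closure (id' a)) n)
    · -- (*R₁) multiplies by a single generator on the left, matching left induction
      induction hx using Submonoid.closure_induction_left with
      | one => exact mem_polL_singleton.2 (hN.star_R₀ a)
      | mul_left x hx y _ ih =>
        exact mem_polL_singleton.2
          (hN.star_R₁ x y a (mem_polL_singleton.1 hx) (mem_polL_singleton.1 ih))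
  · refine (below _ {1} fun z hz => hN.one_L z (hz _ rfl)).antisymm (gam_subset_polL ?_)
    exact Set.singleton_subset_iff.2 (mem_polL_singleton.2 hN.one_R)
  · change polL N {i' a} = polL N {i' b} at hab
    exact hanti a b (mem_polL_singleton.1 (hab ▸ id' a)) (mem_polL_singleton.1 (hab ▸ id' b))

end ResFrames
end

section
/- Let A be a residuated lattice and q the analytic quasiequation α₁ ≤ β & ⋯ & αₙ ≤ β ⟹ α₀ ≤ β with n ≥ 1, where α₀ = x₁⋯x_m for distinct variables, β = y, and each αᵢ (i ≥ 1) is a product of variables from x₁,…,x_m. Then A satisfies q (under all valuations) if and only if A satisfies the equation α₀ ≤ α₁ ∨ ⋯ ∨ αₙ (under all valuations). -/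
/-! A residuated lattice satisfies an analytic quasiequation iff it satisfies the corresponding equation. -/

/-- A residuated lattice `(A, ⊓, ⊔, *, \, /, 1)`: a lattice and a monoid such
that `x * y ≤ z ↔ y ≤ x \ z ↔ x ≤ z / y`. Here `ld x z` is `x \ z` and
`rd z y` is `z / y`. -/
class ResiduatedLattice (A : Type*) extends Lattice A, Monoid A where
  ld : A → A → A
  rd : A → A → A
  resl : ∀ x y z : A, x * y ≤ z ↔ y ≤ ld x z
  resr : ∀ x y z : A, x * y ≤ z ↔ x ≤ rd z y


/-! The premises `αᵢ ≤ y` say jointly that `y` is an upper bound of `α₁, …, αₙ`, that is,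
`α₁ ∨ ⋯ ∨ αₙ ≤ y` (`foldl_sup_map_le_iff`). Since `y` does not occur in the `αᵢ`, the
quasiequation may be instantiated at `y = α₁ ∨ ⋯ ∨ αₙ`, which gives the equation; the converse
is transitivity of `≤`. -/

/-- The left fold of `⊔` computes a finite join: its upper bounds are the common upper
bounds of the starting value and the list. -/
theorem foldl_sup_map_le_iff {A ι : Type*} [Lattice A] (f : ι → A) (l : List ι) (a y : A) :
    (l.map f).foldl (· ⊔ ·) a ≤ y ↔ a ≤ y ∧ ∀ p ∈ l, f p ≤ y := by
  induction l generalizing a with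
  | nil => simp
  | cons b l ih =>
    rw [List.map_cons, List.foldl_cons, ih, sup_le_iff, List.forall_mem_cons, and_assoc]

/-- let `A` be a residuated lattice and `q` the analytic
quasiequation `α₁ ≤ β & ⋯ & αₙ ≤ β ⟹ α₀ ≤ β` (`n ≥ 1`), where
`α₀ = x₁⋯x_m` for distinct variables, `β = y`, and each `αᵢ` (`i ≥ 1`) is a
product of variables from `x₁, …, x_m`, encoded as the nonempty list
`hd :: tl` of lists over `Fin m`. Then `A` satisfies `q` under all valuations
iff `A` satisfies the equation `α₀ ≤ α₁ ∨ ⋯ ∨ αₙ` under all valuations. -/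
theorem statement13 (A : Type*) [ResiduatedLattice A]
    (m : ℕ) (hd : List (Fin m)) (tl : List (List (Fin m))) :
    (∀ (x : Fin m → A) (y : A),
        (∀ p ∈ hd :: tl, (p.map x).prod ≤ y) →
        ((List.finRange m).map x).prod ≤ y) ↔
    (∀ x : Fin m → A,
        ((List.finRange m).map x).prod ≤
          (tl.map fun p => (p.map x).prod).foldl (· ⊔ ·) ((hd.map x).prod)) := by
  have key (x : Fin m → A) (y : A) :
      (∀ p ∈ hd :: tl, (p.map x).prod ≤ y) ↔
        (tl.map fun p => (p.map x).prod).foldl (· ⊔ ·) ((hd.map x).prod) ≤ y := by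
    rw [foldl_sup_map_le_iff (fun p : List (Fin m) => (p.map x).prod), List.forall_mem_cons]
  constructor
  · intro h x
    exact h x _ ((key x _).2 le_rfl)
  · intro h x y hy
    exact (h x).trans ((key x y).1 hy)
end

section
/- Let 𝓡 be a set of analytic structural rules. Then the rule 0R is admissible in ALC^ω + 𝓡: if the sequent Γ ⇒ 0 is provable in ALC^ω + 𝓡, then for all finite lists of formulas Σ_l, Σ_r and every formula β, the sequent Σ_l, Γ, Σ_r ⇒ β is provable in ALC^ω + 𝓡. -/
/-! The proof is by induction on the cut-free derivation of `Γ ⇒ 0`. No right rule and no other axiom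
has `0` as its succedent, so the derivation ends in `0L`, in a left rule or in a structural rule. Each
of these keeps the succedent of its main premises and is closed under enlarging the outer contexts
and changing that succedent, so `Sl`, `Sr` can be absorbed into the contexts of the same rule. The
minor premise `Δ ⇒ α₀` of the left division rules is reused unchanged. -/

/-! The rule 0R is admissible in ALC^ω + 𝓡. -/

/-- Formulas over the language `{∧, ∨, ·, \, /, *, 0, 1}` with countably many
variables. `ld α β` is `α \ β`, `rd α β` is `α / β`. -/
inductive Fm : Type
  | var : ℕ → Fm
  | zero : Fm
  | one : Fm
  | meet : Fm → Fm → Fm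
  | join : Fm → Fm → Fm
  | mul : Fm → Fm → Fm
  | ld : Fm → Fm → Fm
  | rd : Fm → Fm → Fm
  | star : Fm → Fm

/-- An analytic structural rule: a number `m` of sequence metavariables
`Σ₀, …, Σ_{m-1}` and a list of premises, each premise being a list over
`Fin m` (encoding the sequence `Σ_{p(0)}, …, Σ_{p(k-1)}`). An instance of
the rule infers `Γ, Σ₀, …, Σ_{m-1}, Δ ⇒ β` from the premises
`Γ, Σ_{p(0)}, …, Σ_{p(k-1)}, Δ ⇒ β`. -/
structure AnRule : Type where
  m : ℕ
  prems : List (List (Fin m))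

/-- Derivability in the wellfounded, possibly infinitely branching sequent
calculus `ALC^ω + 𝓡` (for `cutFlag = false`), resp. `ALC^ω + 𝓡 + Cut` (for
`cutFlag = true`): identity axiom for variables, all instances of the
analytic structural rules in `R`, the axioms 0L, 1R, *R₀, the left/right
rules for `∧, ∨, ·, \, /, 1` of the Full Lambek calculus, the rule *R₁, and
the ω-rule *L_ω. -/
inductive Deriv (R : Set AnRule) : Bool → List Fm → Fm → Prop
  | id (c : Bool) (n : ℕ) : Deriv R c [.var n] (.var n)
  | rule (c : Bool) (r : AnRule) (hr : r ∈ R) (Γ Δ : List Fm) (β : Fm)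
      (Ss : Fin r.m → List Fm)
      (h : ∀ p ∈ r.prems, Deriv R c (Γ ++ (p.map Ss).flatten ++ Δ) β) :
      Deriv R c (Γ ++ ((List.finRange r.m).map Ss).flatten ++ Δ) β
  | zeroL (c : Bool) (Γ Δ : List Fm) (β : Fm) : Deriv R c (Γ ++ .zero :: Δ) β
  | oneR (c : Bool) : Deriv R c [] .one
  | starR0 (c : Bool) (β : Fm) : Deriv R c [] (.star β)
  | oneL (c : Bool) (Γ Δ : List Fm) (β : Fm)
      (h : Deriv R c (Γ ++ Δ) β) : Deriv R c (Γ ++ .one :: Δ) β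
  | meetL0 (c : Bool) (Γ Δ : List Fm) (α₀ α₁ β : Fm)
      (h : Deriv R c (Γ ++ α₀ :: Δ) β) : Deriv R c (Γ ++ .meet α₀ α₁ :: Δ) β
  | meetL1 (c : Bool) (Γ Δ : List Fm) (α₀ α₁ β : Fm)
      (h : Deriv R c (Γ ++ α₁ :: Δ) β) : Deriv R c (Γ ++ .meet α₀ α₁ :: Δ) β
  | meetR (c : Bool) (Γ : List Fm) (β₀ β₁ : Fm)
      (h₀ : Deriv R c Γ β₀) (h₁ : Deriv R c Γ β₁) : Deriv R c Γ (.meet β₀ β₁)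
  | joinL (c : Bool) (Γ Δ : List Fm) (α₀ α₁ β : Fm)
      (h₀ : Deriv R c (Γ ++ α₀ :: Δ) β) (h₁ : Deriv R c (Γ ++ α₁ :: Δ) β) :
      Deriv R c (Γ ++ .join α₀ α₁ :: Δ) β
  | joinR0 (c : Bool) (Γ : List Fm) (β₀ β₁ : Fm)
      (h : Deriv R c Γ β₀) : Deriv R c Γ (.join β₀ β₁)
  | joinR1 (c : Bool) (Γ : List Fm) (β₀ β₁ : Fm)
      (h : Deriv R c Γ β₁) : Deriv R c Γ (.join β₀ β₁)
  | mulL (c : Bool) (Γ Δ : List Fm) (α₀ α₁ β : Fm)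
      (h : Deriv R c (Γ ++ α₀ :: α₁ :: Δ) β) :
      Deriv R c (Γ ++ .mul α₀ α₁ :: Δ) β
  | mulR (c : Bool) (Γ Δ : List Fm) (β₀ β₁ : Fm)
      (h₀ : Deriv R c Γ β₀) (h₁ : Deriv R c Δ β₁) :
      Deriv R c (Γ ++ Δ) (.mul β₀ β₁)
  | ldL (c : Bool) (Γ Δ Sg : List Fm) (α₀ α₁ β : Fm)
      (h₀ : Deriv R c Δ α₀) (h₁ : Deriv R c (Γ ++ α₁ :: Sg) β) :
      Deriv R c (Γ ++ Δ ++ .ld α₀ α₁ :: Sg) β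
  | ldR (c : Bool) (Γ : List Fm) (β₀ β₁ : Fm)
      (h : Deriv R c (β₀ :: Γ) β₁) : Deriv R c Γ (.ld β₀ β₁)
  | rdL (c : Bool) (Γ Δ Sg : List Fm) (α₀ α₁ β : Fm)
      (h₀ : Deriv R c Δ α₀) (h₁ : Deriv R c (Γ ++ α₁ :: Sg) β) :
      Deriv R c (Γ ++ .rd α₁ α₀ :: (Δ ++ Sg)) β
  | rdR (c : Bool) (Γ : List Fm) (β₀ β₁ : Fm)
      (h : Deriv R c (Γ ++ [β₀]) β₁) : Deriv R c Γ (.rd β₁ β₀)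
  | starR1 (c : Bool) (Γ Δ : List Fm) (β : Fm)
      (h₀ : Deriv R c Γ β) (h₁ : Deriv R c Δ (.star β)) :
      Deriv R c (Γ ++ Δ) (.star β)
  | starLom (c : Bool) (Γ Δ : List Fm) (α β : Fm)
      (h : ∀ n : ℕ, Deriv R c (Γ ++ List.replicate n α ++ Δ) β) :
      Deriv R c (Γ ++ .star α :: Δ) β
  | cut (Γ Δ Pi : List Fm) (α β : Fm)
      (h₀ : Deriv R true Δ α) (h₁ : Deriv R true (Γ ++ α :: Pi) β) :
      Deriv R true (Γ ++ Δ ++ Pi) β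

/-- for any set `𝓡` of analytic structural rules, the rule 0R
is admissible in `ALC^ω + 𝓡`: if `Γ ⇒ 0` is provable, then so is
`Σₗ, Γ, Σᵣ ⇒ β` for all `Σₗ, Σᵣ` and `β`. -/
theorem statement15 (R : Set AnRule) (Γ : List Fm)
    (h : Deriv R false Γ .zero) :
    ∀ (Sl Sr : List Fm) (β : Fm), Deriv R false (Sl ++ Γ ++ Sr) β := by
  intro Sl Sr β
  generalize hc : false = c at h
  generalize hz : Fm.zero = z at h
  induction h with
  | rule c r hr Γ Δ z Ss h ih =>
    have := Deriv.rule (R := R) c r hr (Sl ++ Γ) (Δ ++ Sr) β Ss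
      (fun p hp => by simpa using ih p hp hc hz)
    simpa using this
  | zeroL c Γ Δ z => simpa using Deriv.zeroL (R := R) c (Sl ++ Γ) (Δ ++ Sr) β
  | oneL c Γ Δ z h ih =>
    simpa using Deriv.oneL (R := R) c (Sl ++ Γ) (Δ ++ Sr) β (by simpa using ih hc hz)
  | meetL0 c Γ Δ α₀ α₁ z h ih =>
    simpa using Deriv.meetL0 (R := R) c (Sl ++ Γ) (Δ ++ Sr) α₀ α₁ β
      (by simpa using ih hc hz)
  | meetL1 c Γ Δ α₀ α₁ z h ih =>
    simpa using Deriv.meetL1 (R := R) c (Sl ++ Γ) (Δ ++ Sr) α₀ α₁ β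
      (by simpa using ih hc hz)
  | joinL c Γ Δ α₀ α₁ z h₀ h₁ ih₀ ih₁ =>
    simpa using Deriv.joinL (R := R) c (Sl ++ Γ) (Δ ++ Sr) α₀ α₁ β
      (by simpa using ih₀ hc hz) (by simpa using ih₁ hc hz)
  | mulL c Γ Δ α₀ α₁ z h ih =>
    simpa using Deriv.mulL (R := R) c (Sl ++ Γ) (Δ ++ Sr) α₀ α₁ β
      (by simpa using ih hc hz)
  | ldL c Γ Δ Sg α₀ α₁ z h₀ h₁ _ ih =>
    simpa using Deriv.ldL (R := R) c (Sl ++ Γ) Δ (Sg ++ Sr) α₀ α₁ β h₀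
      (by simpa using ih hc hz)
  | rdL c Γ Δ Sg α₀ α₁ z h₀ h₁ _ ih =>
    simpa using Deriv.rdL (R := R) c (Sl ++ Γ) Δ (Sg ++ Sr) α₀ α₁ β h₀
      (by simpa using ih hc hz)
  | starLom c Γ Δ α z h ih =>
    simpa using Deriv.starLom (R := R) c (Sl ++ Γ) (Δ ++ Sr) α β
      (fun n => by simpa using ih n hc hz)
  | cut => cases hc
  | _ => cases hz
end

section
/- Soundness: let 𝓡 be a set of analytic structural rules. If the sequent α₀,…,αₙ ⇒ β is provable in ALC^ω + 𝓡, then every *-continuous action lattice satisfying all quasiequations in Q_a(𝓡) validates the inequality α₀·⋯·αₙ ≤ β under every valuation of variables (interpreting the formula connectives by the corresponding operations of the action lattice, and the empty product as 1). -/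
/-- An action lattice: a residuated lattice with a least element `azero` and
a Kleene star `astar` satisfying `1 ⊔ x * x* ≤ x*`, `x * y ≤ y → x* * y ≤ y`
and `y * x ≤ y → y * x* ≤ y`. -/
class ActionLattice (A : Type*) extends ResiduatedLattice A where
  azero : A
  astar : A → A
  zero_le : ∀ x : A, azero ≤ x
  star_unfold : ∀ x : A, 1 ⊔ x * astar x ≤ astar x
  star_indl : ∀ x y : A, x * y ≤ y → astar x * y ≤ y
  star_indr : ∀ x y : A, y * x ≤ y → y * astar x ≤ y

/-- `*`-continuity: `a*` is the supremum of `{aⁿ | n ∈ ℕ}` for every `a`. -/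
def StarContinuous (A : Type*) [ActionLattice A] : Prop :=
  ∀ a : A, IsLUB (Set.range fun n : ℕ => a ^ n) (ActionLattice.astar a)

/-- Evaluation of a formula in an action lattice under a valuation of the
variables. -/
def Fm.eval {A : Type*} [ActionLattice A] (v : ℕ → A) : Fm → A
  | .var n => v n
  | .zero => ActionLattice.azero
  | .one => 1
  | .meet a b => Fm.eval v a ⊓ Fm.eval v b
  | .join a b => Fm.eval v a ⊔ Fm.eval v b
  | .mul a b => Fm.eval v a * Fm.eval v b
  | .ld a b => ResiduatedLattice.ld (Fm.eval v a) (Fm.eval v b)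
  | .rd a b => ResiduatedLattice.rd (Fm.eval v a) (Fm.eval v b)
  | .star a => ActionLattice.astar (Fm.eval v a)

/-- The algebra `A` satisfies the analytic quasiequation `q_a(r)` associated
to the analytic structural rule `r`: for all `x₀, …, x_{m-1}, y` in `A`, if
`∏_{i ∈ p} xᵢ ≤ y` for every premise `p` (empty product `= 1`), then
`x₀ ⋯ x_{m-1} ≤ y`. -/
def SatQa (A : Type*) [ActionLattice A] (r : AnRule) : Prop :=
  ∀ (x : Fin r.m → A) (y : A),
    (∀ p ∈ r.prems, (p.map x).prod ≤ y) →
    ((List.finRange r.m).map x).prod ≤ y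

section Residuation

variable {A : Type*} [ResiduatedLattice A]

open ResiduatedLattice

/-- Placing an element between `a` and `b` is a lower adjoint: this moves an inequality from a
sequent's context to the formula in focus. -/
theorem context_le_iff (a b x y : A) : a * (x * b) ≤ y ↔ x ≤ rd (ld a y) b := by
  rw [resl, resr]

theorem context_mono (a b : A) {x x' : A} (h : x ≤ x') : a * (x * b) ≤ a * (x' * b) :=
  (context_le_iff a b x _).2 (h.trans ((context_le_iff a b x' _).1 le_rfl))

theorem residuated_mul_le_mul {x x' y y' : A} (hx : x ≤ x') (hy : y ≤ y') : x * y ≤ x' * y' :=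
  calc
    x * y ≤ x' * y := by simpa using context_mono 1 y hx
    _ ≤ x' * y' := by simpa using context_mono x' 1 hy

theorem mul_ld_le (x y : A) : x * ld x y ≤ y := (resl _ _ _).2 le_rfl

theorem rd_mul_le (x y : A) : rd y x * x ≤ y := (resr _ _ _).2 le_rfl

end Residuation

theorem prod_map_flatten {M : Type*} [Monoid M] {ι : Type*} (f : Fm → M) (S : ι → List Fm)
    (l : List ι) :
    ((l.map S).flatten.map f).prod = (l.map fun i => ((S i).map f).prod).prod := by
  induction l with
  | nil => simp
  | cons i l ih => simp only [List.map_cons, List.flatten_cons, List.map_append, List.prod_append,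
      List.prod_cons, ih]

/-- Soundness for derivations with or without cut. -/
theorem Deriv.sound {R : Set AnRule} {c : Bool} {Γ : List Fm} {β : Fm} (h : Deriv R c Γ β)
    {A : Type*} [ActionLattice A] (hA : StarContinuous A) (hR : ∀ r ∈ R, SatQa A r)
    (v : ℕ → A) : (Γ.map (Fm.eval v)).prod ≤ Fm.eval v β := by
  induction h with
  | id c n => simp
  | rule c r hr Γ Δ β Ss h ih =>
    simp only [List.map_append, List.prod_append, prod_map_flatten, mul_assoc,
      context_le_iff] at ih ⊢
    exact hR r hr _ _ ih
  | zeroL c Γ Δ β =>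
    simp only [List.map_append, List.map_cons, List.prod_append, List.prod_cons, context_le_iff]
    exact ActionLattice.zero_le _
  | oneR c => simp [Fm.eval]
  | starR0 c β => simpa [Fm.eval] using le_sup_left.trans (ActionLattice.star_unfold (Fm.eval v β))
  | oneL c Γ Δ β h ih => simpa [Fm.eval] using ih
  | meetL0 c Γ Δ α₀ α₁ β h ih =>
    simp only [List.map_append, List.map_cons, List.prod_append, List.prod_cons] at ih ⊢
    exact (context_mono _ _ inf_le_left).trans ih
  | meetL1 c Γ Δ α₀ α₁ β h ih =>
    simp only [List.map_append, List.map_cons, List.prod_append, List.prod_cons] at ih ⊢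
    exact (context_mono _ _ inf_le_right).trans ih
  | meetR c Γ β₀ β₁ h₀ h₁ ih₀ ih₁ => exact le_inf ih₀ ih₁
  | joinL c Γ Δ α₀ α₁ β h₀ h₁ ih₀ ih₁ =>
    simp only [List.map_append, List.map_cons, List.prod_append, List.prod_cons,
      context_le_iff] at ih₀ ih₁ ⊢
    exact sup_le ih₀ ih₁
  | joinR0 c Γ β₀ β₁ h ih => exact ih.trans le_sup_left
  | joinR1 c Γ β₀ β₁ h ih => exact ih.trans le_sup_right
  | mulL c Γ Δ α₀ α₁ β h ih => simpa [Fm.eval, mul_assoc] using ih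
  | mulR c Γ Δ β₀ β₁ h₀ h₁ ih₀ ih₁ =>
    simpa [Fm.eval] using residuated_mul_le_mul ih₀ ih₁
  | ldL c Γ Δ Sg α₀ α₁ β h₀ h₁ ih₀ ih₁ =>
    have key := (residuated_mul_le_mul ih₀ le_rfl).trans (mul_ld_le (Fm.eval v α₀) (Fm.eval v α₁))
    simp only [List.map_append, List.map_cons, List.prod_append, List.prod_cons] at ih₁ ⊢
    simpa [Fm.eval, mul_assoc] using (context_mono _ _ key).trans ih₁
  | ldR c Γ β₀ β₁ h ih => exact (ResiduatedLattice.resl _ _ _).1 (by simpa using ih)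
  | rdL c Γ Δ Sg α₀ α₁ β h₀ h₁ ih₀ ih₁ =>
    have key := (residuated_mul_le_mul le_rfl ih₀).trans (rd_mul_le (Fm.eval v α₀) (Fm.eval v α₁))
    simp only [List.map_append, List.map_cons, List.prod_append, List.prod_cons] at ih₁ ⊢
    simpa [Fm.eval, mul_assoc] using (context_mono _ _ key).trans ih₁
  | rdR c Γ β₀ β₁ h ih => exact (ResiduatedLattice.resr _ _ _).1 (by simpa using ih)
  | starR1 c Γ Δ β h₀ h₁ ih₀ ih₁ =>
    have key := (residuated_mul_le_mul ih₀ ih₁).trans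
      (le_sup_right.trans (ActionLattice.star_unfold (Fm.eval v β)))
    simpa [Fm.eval] using key
  | starLom c Γ Δ α β h ih =>
    simp only [List.map_append, List.map_cons, List.map_replicate, List.prod_append,
      List.prod_cons, List.prod_replicate, mul_assoc, context_le_iff] at ih ⊢
    refine (hA (Fm.eval v α)).2 ?_
    rintro _ ⟨n, rfl⟩
    exact ih n
  | cut Γ Δ Pi α β h₀ h₁ ih₀ ih₁ =>
    simp only [List.map_append, List.map_cons, List.prod_append, List.prod_cons,
      mul_assoc] at ih₁ ⊢
    exact (context_mono _ _ ih₀).trans ih₁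

/-- Soundness: if the sequent `Γ ⇒ β` is provable in
`ALC^ω + 𝓡`, then every `*`-continuous action lattice satisfying all
quasiequations in `Q_a(𝓡)` validates `∏Γ ≤ β` under every valuation
(the empty product being `1`). -/
theorem statement16 (R : Set AnRule) (Γ : List Fm) (β : Fm)
    (h : Deriv R false Γ β) :
    ∀ (A : Type) [ActionLattice A], StarContinuous A →
      (∀ r ∈ R, SatQa A r) → ∀ v : ℕ → A,
        (Γ.map (Fm.eval v)).prod ≤ Fm.eval v β := by
  intro A _ hA hR v
  exact h.sound hA hR v
end

section
/- Cut-free completeness: let 𝓡 be a set of analytic structural rules and S = (α₀,…,αₙ ⇒ β) a sequent. If every *-continuous action lattice satisfying all quasiequations in Q_a(𝓡) validates the inequality α₀·⋯·αₙ ≤ β under every valuation of variables, then S is provable in ALC^ω + 𝓡. -/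
/-! ### The closure operator given by cut-free derivability -/

/-- The closure of a set of sequences: all `Θ` satisfying every context `(Γ, Δ, β)` that is
satisfied by all members of `X`, where `Θ` satisfies `(Γ, Δ, β)` if `Γ, Θ, Δ ⇒ β` has a cut-free
derivation. -/
def cl (R : Set AnRule) (X : Set (List Fm)) : Set (List Fm) :=
  {Θ | ∀ Γ Δ β, (∀ Φ ∈ X, Deriv R false (Γ ++ Φ ++ Δ) β) → Deriv R false (Γ ++ Θ ++ Δ) β}

theorem subset_cl (R : Set AnRule) (X : Set (List Fm)) : X ⊆ cl R X :=
  fun _ hΘ _ _ _ hc => hc _ hΘ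

theorem cl_cl (R : Set AnRule) (X : Set (List Fm)) : cl R (cl R X) ⊆ cl R X :=
  fun _ hΘ Γ Δ β hc => hΘ Γ Δ β fun _ hΦ => hΦ Γ Δ β hc

/-- The sets of sequences closed under `cl R`. -/
@[ext] structure ClSet (R : Set AnRule) : Type where
  /-- The underlying set of sequences. -/
  carrier : Set (List Fm)
  closed : cl R carrier ⊆ carrier

namespace ClSet

variable {R : Set AnRule}

/-- The least closed set containing `X`. -/
def mk' (R : Set AnRule) (X : Set (List Fm)) : ClSet R := ⟨cl R X, cl_cl R X⟩

instance : PartialOrder (ClSet R) where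
  le X Y := X.carrier ⊆ Y.carrier
  le_refl X := Set.Subset.refl X.carrier
  le_trans _ _ _ h k := Set.Subset.trans h k
  le_antisymm _ _ h k := ClSet.ext (Set.Subset.antisymm h k)

theorem le_def (X Y : ClSet R) : X ≤ Y ↔ X.carrier ⊆ Y.carrier := Iff.rfl

theorem mk'_le (X : Set (List Fm)) (Y : ClSet R) : mk' R X ≤ Y ↔ X ⊆ Y.carrier :=
  ⟨fun h => (subset_cl R X).trans h,
    fun h _ hΘ => Y.closed fun Γ Δ β hc => hΘ Γ Δ β fun _ hΦ => hc _ (h hΦ)⟩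

theorem mem_mk' {X : Set (List Fm)} {Θ : List Fm} (h : Θ ∈ X) : Θ ∈ (mk' R X).carrier :=
  subset_cl R X h

/-! ### The algebra of closed sets -/

instance : Lattice (ClSet R) where
  inf X Y := ⟨X.carrier ∩ Y.carrier, fun _ h =>
    ⟨X.closed fun Γ Δ β hc => h Γ Δ β fun _ hΦ => hc _ hΦ.1,
      Y.closed fun Γ Δ β hc => h Γ Δ β fun _ hΦ => hc _ hΦ.2⟩⟩
  sup X Y := mk' R (X.carrier ∪ Y.carrier)
  inf_le_left _ _ := Set.inter_subset_left
  inf_le_right _ _ := Set.inter_subset_right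
  le_inf _ _ _ h k := Set.subset_inter h k
  le_sup_left _ _ := Set.subset_union_left.trans (subset_cl R _)
  le_sup_right _ _ := Set.subset_union_right.trans (subset_cl R _)
  sup_le _ _ _ h k := (mk'_le _ _).2 (Set.union_subset h k)

instance : Mul (ClSet R) := ⟨fun X Y => mk' R (Set.image2 (· ++ ·) X.carrier Y.carrier)⟩

instance : One (ClSet R) := ⟨mk' R {[]}⟩

theorem mul_le (X Y Z : ClSet R) :
    X * Y ≤ Z ↔ ∀ a ∈ X.carrier, ∀ b ∈ Y.carrier, a ++ b ∈ Z.carrier :=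
  (mk'_le _ _).trans Set.image2_subset_iff

theorem one_le (Z : ClSet R) : 1 ≤ Z ↔ [] ∈ Z.carrier :=
  (mk'_le _ _).trans Set.singleton_subset_iff

theorem append_mem {X Y : ClSet R} {a b : List Fm} (ha : a ∈ X.carrier) (hb : b ∈ Y.carrier) :
    a ++ b ∈ (X * Y).carrier :=
  (mul_le X Y _).1 le_rfl a ha b hb

theorem nil_mem_one : [] ∈ (1 : ClSet R).carrier := (one_le 1).1 le_rfl

/-- The left residual `X \ Z`. It is closed because a context for `Z` together with a sequence
from `X` placed on the left is a context for `X \ Z`. -/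
def ldiv (X Z : ClSet R) : ClSet R where
  carrier := {Θ | ∀ a ∈ X.carrier, a ++ Θ ∈ Z.carrier}
  closed := by
    intro Θ hΘ a ha
    refine Z.closed fun Γ Δ β hc => ?_
    simpa using hΘ (Γ ++ a) Δ β fun Φ hΦ => by simpa using hc _ (hΦ a ha)

/-- The right residual `Z / Y`. -/
def rdiv (Z Y : ClSet R) : ClSet R where
  carrier := {Θ | ∀ b ∈ Y.carrier, Θ ++ b ∈ Z.carrier}
  closed := by
    intro Θ hΘ b hb
    refine Z.closed fun Γ Δ β hc => ?_
    simpa using hΘ Γ (b ++ Δ) β fun Φ hΦ => by simpa using hc _ (hΦ b hb)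

theorem mul_le_iff_ldiv (X Y Z : ClSet R) : X * Y ≤ Z ↔ Y ≤ ldiv X Z :=
  (mul_le X Y Z).trans ⟨fun h b hb a ha => h a ha b hb, fun h a ha _ hb => h hb a ha⟩

theorem mul_le_iff_rdiv (X Y Z : ClSet R) : X * Y ≤ Z ↔ X ≤ rdiv Z Y :=
  (mul_le X Y Z).trans ⟨fun h a ha b hb => h a ha b hb, fun h _ ha b hb => h ha b hb⟩

instance : Monoid (ClSet R) where
  mul_assoc X Y Z := eq_of_forall_ge_iff fun W => by
    rw [mul_le_iff_rdiv, mul_le, mul_le_iff_ldiv X, mul_le]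
    constructor
    · intro h b hb c hc a ha
      simpa using h a ha b hb c hc
    · intro h a ha b hb c hc
      simpa using h b hb c hc a ha
  one_mul X := eq_of_forall_ge_iff fun W => by
    rw [mul_le_iff_rdiv, one_le]
    exact Iff.rfl
  mul_one X := eq_of_forall_ge_iff fun W => by
    rw [mul_le_iff_ldiv, one_le]
    simp [ldiv, le_def, Set.subset_def]

/-- The Kleene star: the closure of the set of all finite concatenations of members of `X`. -/
def kstar (X : ClSet R) : ClSet R :=
  mk' R {Θ | ∃ L : List (List Fm), (∀ a ∈ L, a ∈ X.carrier) ∧ L.flatten = Θ}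

theorem kstar_le (X Y : ClSet R) :
    kstar X ≤ Y ↔ ∀ L : List (List Fm), (∀ a ∈ L, a ∈ X.carrier) → L.flatten ∈ Y.carrier := by
  refine (mk'_le _ _).trans ⟨fun h L hL => h ⟨L, hL, rfl⟩, ?_⟩
  rintro h _ ⟨L, hL, rfl⟩
  exact h L hL

theorem flatten_mem_kstar {X : ClSet R} {L : List (List Fm)} (h : ∀ a ∈ L, a ∈ X.carrier) :
    L.flatten ∈ (kstar X).carrier :=
  mem_mk' ⟨L, h, rfl⟩

theorem mul_kstar_le (X : ClSet R) : X * kstar X ≤ kstar X := by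
  rw [mul_le_iff_ldiv, kstar_le]
  intro L hL a ha
  exact flatten_mem_kstar (L := a :: L) (by simpa using ⟨ha, hL⟩)

theorem one_le_kstar (X : ClSet R) : 1 ≤ kstar X :=
  (one_le _).2 (flatten_mem_kstar (L := []) (by simp))

instance : ActionLattice (ClSet R) where
  ld := ldiv
  rd := rdiv
  resl := mul_le_iff_ldiv
  resr := mul_le_iff_rdiv
  azero := mk' R ∅
  astar := kstar
  zero_le X := (mk'_le _ _).2 (Set.empty_subset _)
  star_unfold X := sup_le (one_le_kstar X) (mul_kstar_le X)
  star_indl X Y h := by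
    rw [mul_le_iff_rdiv, kstar_le]
    intro L
    induction L with
    | nil => intro _ b hb; exact hb
    | cons a L ih =>
      intro hL b hb
      have hb' := ih (fun c hc => hL c (by simp [hc])) b hb
      simpa using (mul_le _ _ _).1 h a (hL a (by simp)) _ hb'
  star_indr X Y h := by
    rw [mul_le_iff_ldiv, kstar_le]
    intro L
    induction L with
    | nil => intro _ b hb; simpa using hb
    | cons a L ih =>
      intro hL b hb
      have hb' := (mul_le _ _ _).1 h b hb a (hL a (by simp))
      simpa using ih (fun c hc => hL c (by simp [hc])) _ hb'

theorem flatten_mem_pow {X : ClSet R} (L : List (List Fm)) (h : ∀ a ∈ L, a ∈ X.carrier) :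
    L.flatten ∈ (X ^ L.length).carrier := by
  induction L with
  | nil => simpa using nil_mem_one
  | cons a L ih =>
    rw [List.length_cons, pow_succ', List.flatten_cons]
    exact append_mem (h a (by simp)) (ih fun c hc => h c (by simp [hc]))

theorem starContinuous (R : Set AnRule) : StarContinuous (ClSet R) := by
  intro X
  constructor
  · rintro _ ⟨n, rfl⟩
    change X ^ n ≤ kstar X
    induction n with
    | zero => simpa using one_le_kstar X
    | succ n ih =>
      rw [pow_succ', mul_le]
      intro a ha b hb
      exact (mul_le _ _ _).1 (mul_kstar_le X) a ha b (ih hb)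
  · intro Y hY
    change kstar X ≤ Y
    rw [kstar_le]
    exact fun L hL => hY ⟨L.length, rfl⟩ (flatten_mem_pow L hL)

/-! ### The quasiequations of the rules -/

theorem prod_le (l : List (ClSet R)) (Y : ClSet R)
    (h : ∀ L : List (List Fm), List.Forall₂ (fun a X => a ∈ X.carrier) L l →
      L.flatten ∈ Y.carrier) : l.prod ≤ Y := by
  induction l generalizing Y with
  | nil => exact (one_le Y).2 (h [] .nil)
  | cons X l ih =>
    rw [List.prod_cons, mul_le_iff_ldiv]
    exact ih _ fun L hL a ha => h (a :: L) (.cons ha hL)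

theorem flatten_mem_prod {ι : Type*} (p : List ι) (f : ι → List Fm) (x : ι → ClSet R)
    (h : ∀ i ∈ p, f i ∈ (x i).carrier) : (p.map f).flatten ∈ (p.map x).prod.carrier := by
  induction p with
  | nil => exact nil_mem_one
  | cons i p ih =>
    simp only [List.map_cons, List.flatten_cons, List.prod_cons]
    exact append_mem (h i (by simp)) (ih fun j hj => h j (by simp [hj]))

theorem satQa (r : AnRule) (hr : r ∈ R) : SatQa (ClSet R) r := by
  intro x Y h
  apply prod_le
  intro L hL
  have hlen : L.length = r.m := by simpa using hL.length_eq
  obtain ⟨f, rfl⟩ : ∃ f : Fin r.m → List Fm, L = (List.finRange r.m).map f :=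
    ⟨fun i => L.get (i.cast hlen.symm), by
      apply List.ext_get <;> simp [hlen]⟩
  have hf : ∀ i, f i ∈ (x i).carrier := by
    simpa [List.forall₂_map_left_iff, List.forall₂_map_right_iff, List.forall₂_same] using hL
  -- `Y` is an intersection of contexts, and in each of these the rule `r` applies.
  refine Y.closed fun Γ Δ β hc => .rule _ r hr Γ Δ β f fun p hp => hc _ ?_
  exact h p hp (flatten_mem_prod p f x fun i _ => hf i)

/-! ### The canonical valuation -/

/-- The closed set of all sequences that derive `α`. -/
def below (R : Set AnRule) (α : Fm) : ClSet R where
  carrier := {Θ | Deriv R false Θ α}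
  closed := fun Θ h => by
    simpa using h [] [] α fun Φ hΦ => by simpa using hΦ

/-- The canonical valuation, sending a variable to the closed set of sequences deriving it. -/
def val (R : Set AnRule) (n : ℕ) : ClSet R := below R (.var n)

/-- The values under the canonical valuation approximate the formulas from both sides without an
appeal to cut: `[α]` belongs to the value of `α`, and every member of that value derives `α`. -/
theorem okada (R : Set AnRule) (α : Fm) :
    [α] ∈ (α.eval (val R)).carrier ∧ α.eval (val R) ≤ below R α := by
  induction α with
  | var n => exact ⟨.id _ n, le_rfl⟩
  | zero =>
    refine ⟨fun Γ Δ β _ => ?_, ActionLattice.zero_le _⟩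
    simpa using Deriv.zeroL (R := R) false Γ Δ β
  | one =>
    refine ⟨fun Γ Δ β hc => ?_, (one_le _).2 (.oneR _)⟩
    simpa using Deriv.oneL (R := R) false Γ Δ β (by simpa using hc [] rfl)
  | meet a b iha ihb =>
    refine ⟨⟨(Fm.eval (val R) a).closed fun Γ Δ β hc => ?_,
      (Fm.eval (val R) b).closed fun Γ Δ β hc => ?_⟩,
      fun Θ h => .meetR _ _ _ _ (iha.2 h.1) (ihb.2 h.2)⟩
    · simpa using Deriv.meetL0 (R := R) false Γ Δ a b β (by simpa using hc _ iha.1)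
    · simpa using Deriv.meetL1 (R := R) false Γ Δ a b β (by simpa using hc _ ihb.1)
  | join a b iha ihb =>
    refine ⟨fun Γ Δ β hc => ?_, sup_le (fun Θ h => .joinR0 _ _ _ _ (iha.2 h))
      (fun Θ h => .joinR1 _ _ _ _ (ihb.2 h))⟩
    simpa using Deriv.joinL (R := R) false Γ Δ a b β (by simpa using hc _ (.inl iha.1))
      (by simpa using hc _ (.inr ihb.1))
  | mul a b iha ihb =>
    refine ⟨fun Γ Δ β hc => ?_, (mul_le _ _ _).2 fun Θ h Φ k =>
      .mulR _ _ _ _ _ (iha.2 h) (ihb.2 k)⟩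
    simpa using Deriv.mulL (R := R) false Γ Δ a b β
      (by simpa using hc _ ⟨_, iha.1, _, ihb.1, rfl⟩)
  | ld a b iha ihb =>
    refine ⟨fun Θ h => (Fm.eval (val R) b).closed fun Γ Δ β hc => ?_, fun Θ h =>
      .ldR _ _ _ _ (ihb.2 (h _ iha.1))⟩
    simpa using Deriv.ldL (R := R) false Γ Θ Δ a b β (iha.2 h) (by simpa using hc _ ihb.1)
  | rd b a ihb iha =>
    refine ⟨fun Θ h => (Fm.eval (val R) b).closed fun Γ Δ β hc => ?_, fun Θ h =>
      .rdR _ _ _ _ (ihb.2 (h _ iha.1))⟩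
    simpa using Deriv.rdL (R := R) false Γ Θ Δ a b β (iha.2 h) (by simpa using hc _ ihb.1)
  | star a iha =>
    constructor
    · intro Γ Δ β hc
      have key : ∀ n : ℕ, Deriv R false (Γ ++ List.replicate n a ++ Δ) β := fun n =>
        hc _ ⟨List.replicate n [a], fun c hcn => by
          rw [List.eq_of_mem_replicate hcn]; exact iha.1, by simp⟩
      simpa using Deriv.starLom (R := R) false Γ Δ a β key
    · refine (kstar_le _ _).2 fun L => ?_
      induction L with
      | nil => exact fun _ => .starR0 _ _
      | cons c L ih =>
        intro hL
        exact .starR1 _ _ _ _ (iha.2 (hL c (by simp))) (ih fun d hd => hL d (by simp [hd]))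

end ClSet

/-- Cut-free completeness: if every `*`-continuous action
lattice satisfying all quasiequations in `Q_a(𝓡)` validates `∏Γ ≤ β` under
every valuation, then the sequent `Γ ⇒ β` is provable in the cut-free system
`ALC^ω + 𝓡`. -/
theorem statement17 (R : Set AnRule) (Γ : List Fm) (β : Fm)
    (h : ∀ (A : Type) [ActionLattice A], StarContinuous A →
      (∀ r ∈ R, SatQa A r) → ∀ v : ℕ → A,
        (Γ.map (Fm.eval v)).prod ≤ Fm.eval v β) :
    Deriv R false Γ β := by
  have hmem := ClSet.flatten_mem_prod Γ (fun α => [α]) (Fm.eval (ClSet.val R))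
    fun α _ => (ClSet.okada R α).1
  have hle := h (ClSet R) (ClSet.starContinuous R) (fun r hr => ClSet.satQa r hr) (ClSet.val R)
  simpa [← List.flatMap_def, ClSet.below] using (ClSet.okada R β).2 (hle hmem)
end

section
/- The rule ·L is height-preserving invertible in ALC^ω + 𝓡 for any set 𝓡 of analytic structural rules: if there is a derivation π of Γ, α·β, Δ ⇒ γ in ALC^ω + 𝓡, then there is a derivation τ of Γ, α, β, Δ ⇒ γ in ALC^ω + 𝓡 with height(τ) ≤ height(π), where the height of a (wellfounded, possibly infinitely branching) derivation is the ordinal least upper bound strictly above the heights of its immediate subderivations. -/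
/-- Wellfounded (possibly infinitely branching) derivations in `ALC^ω + 𝓡`. -/
inductive DTree (R : Set AnRule) : List Fm → Fm → Type
  | id (n : ℕ) : DTree R [.var n] (.var n)
  | rule (r : AnRule) (hr : r ∈ R) (Γ Δ : List Fm) (β : Fm)
      (Ss : Fin r.m → List Fm)
      (h : ∀ p ∈ r.prems, DTree R (Γ ++ (p.map Ss).flatten ++ Δ) β) :
      DTree R (Γ ++ ((List.finRange r.m).map Ss).flatten ++ Δ) β
  | zeroL (Γ Δ : List Fm) (β : Fm) : DTree R (Γ ++ .zero :: Δ) β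
  | oneR : DTree R [] .one
  | starR0 (β : Fm) : DTree R [] (.star β)
  | oneL (Γ Δ : List Fm) (β : Fm)
      (h : DTree R (Γ ++ Δ) β) : DTree R (Γ ++ .one :: Δ) β
  | meetL0 (Γ Δ : List Fm) (α₀ α₁ β : Fm)
      (h : DTree R (Γ ++ α₀ :: Δ) β) : DTree R (Γ ++ .meet α₀ α₁ :: Δ) β
  | meetL1 (Γ Δ : List Fm) (α₀ α₁ β : Fm)
      (h : DTree R (Γ ++ α₁ :: Δ) β) : DTree R (Γ ++ .meet α₀ α₁ :: Δ) β
  | meetR (Γ : List Fm) (β₀ β₁ : Fm)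
      (h₀ : DTree R Γ β₀) (h₁ : DTree R Γ β₁) : DTree R Γ (.meet β₀ β₁)
  | joinL (Γ Δ : List Fm) (α₀ α₁ β : Fm)
      (h₀ : DTree R (Γ ++ α₀ :: Δ) β) (h₁ : DTree R (Γ ++ α₁ :: Δ) β) :
      DTree R (Γ ++ .join α₀ α₁ :: Δ) β
  | joinR0 (Γ : List Fm) (β₀ β₁ : Fm)
      (h : DTree R Γ β₀) : DTree R Γ (.join β₀ β₁)
  | joinR1 (Γ : List Fm) (β₀ β₁ : Fm)
      (h : DTree R Γ β₁) : DTree R Γ (.join β₀ β₁)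
  | mulL (Γ Δ : List Fm) (α₀ α₁ β : Fm)
      (h : DTree R (Γ ++ α₀ :: α₁ :: Δ) β) :
      DTree R (Γ ++ .mul α₀ α₁ :: Δ) β
  | mulR (Γ Δ : List Fm) (β₀ β₁ : Fm)
      (h₀ : DTree R Γ β₀) (h₁ : DTree R Δ β₁) :
      DTree R (Γ ++ Δ) (.mul β₀ β₁)
  | ldL (Γ Δ Sg : List Fm) (α₀ α₁ β : Fm)
      (h₀ : DTree R Δ α₀) (h₁ : DTree R (Γ ++ α₁ :: Sg) β) :
      DTree R (Γ ++ Δ ++ .ld α₀ α₁ :: Sg) β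
  | ldR (Γ : List Fm) (β₀ β₁ : Fm)
      (h : DTree R (β₀ :: Γ) β₁) : DTree R Γ (.ld β₀ β₁)
  | rdL (Γ Δ Sg : List Fm) (α₀ α₁ β : Fm)
      (h₀ : DTree R Δ α₀) (h₁ : DTree R (Γ ++ α₁ :: Sg) β) :
      DTree R (Γ ++ .rd α₁ α₀ :: (Δ ++ Sg)) β
  | rdR (Γ : List Fm) (β₀ β₁ : Fm)
      (h : DTree R (Γ ++ [β₀]) β₁) : DTree R Γ (.rd β₁ β₀)
  | starR1 (Γ Δ : List Fm) (β : Fm)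
      (h₀ : DTree R Γ β) (h₁ : DTree R Δ (.star β)) :
      DTree R (Γ ++ Δ) (.star β)
  | starLom (Γ Δ : List Fm) (α β : Fm)
      (h : ∀ n : ℕ, DTree R (Γ ++ List.replicate n α ++ Δ) β) :
      DTree R (Γ ++ .star α :: Δ) β

/-- The (ordinal) height of a derivation: the least upper bound strictly
above the heights of its immediate subderivations. -/
noncomputable def DTree.height {R : Set AnRule} :
    ∀ {Γ : List Fm} {β : Fm}, DTree R Γ β → Ordinal.{0}
  | _, _, .id _ => 0
  | _, _, .rule r _ _ _ _ _ h =>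
      ⨆ p : {q // q ∈ r.prems}, DTree.height (h p.1 p.2) + 1
  | _, _, .zeroL _ _ _ => 0
  | _, _, .oneR => 0
  | _, _, .starR0 _ => 0
  | _, _, .oneL _ _ _ h => DTree.height h + 1
  | _, _, .meetL0 _ _ _ _ _ h => DTree.height h + 1
  | _, _, .meetL1 _ _ _ _ _ h => DTree.height h + 1
  | _, _, .meetR _ _ _ h₀ h₁ => max (DTree.height h₀ + 1) (DTree.height h₁ + 1)
  | _, _, .joinL _ _ _ _ _ h₀ h₁ => max (DTree.height h₀ + 1) (DTree.height h₁ + 1)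
  | _, _, .joinR0 _ _ _ h => DTree.height h + 1
  | _, _, .joinR1 _ _ _ h => DTree.height h + 1
  | _, _, .mulL _ _ _ _ _ h => DTree.height h + 1
  | _, _, .mulR _ _ _ _ h₀ h₁ => max (DTree.height h₀ + 1) (DTree.height h₁ + 1)
  | _, _, .ldL _ _ _ _ _ _ h₀ h₁ => max (DTree.height h₀ + 1) (DTree.height h₁ + 1)
  | _, _, .ldR _ _ _ h => DTree.height h + 1
  | _, _, .rdL _ _ _ _ _ _ h₀ h₁ => max (DTree.height h₀ + 1) (DTree.height h₁ + 1)
  | _, _, .rdR _ _ _ h => DTree.height h + 1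
  | _, _, .starR1 _ _ _ h₀ h₁ => max (DTree.height h₀ + 1) (DTree.height h₁ + 1)
  | _, _, .starLom _ _ _ _ h => ⨆ n : ℕ, DTree.height (h n) + 1

/-- `Unfold α β Γ Γ'`: the list `Γ'` arises from `Γ` by replacing some (possibly none, not
necessarily all) of the entries `α·β` by the two entries `α, β`. -/
inductive Unfold (α β : Fm) : List Fm → List Fm → Prop
  | nil : Unfold α β [] []
  | keep (x : Fm) {Γ Γ' : List Fm} : Unfold α β Γ Γ' → Unfold α β (x :: Γ) (x :: Γ')
  | split {Γ Γ' : List Fm} : Unfold α β Γ Γ' → Unfold α β (.mul α β :: Γ) (α :: β :: Γ')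

namespace Unfold

variable {α β : Fm}

theorem refl : ∀ Γ : List Fm, Unfold α β Γ Γ
  | [] => .nil
  | x :: Γ => .keep x (refl Γ)

theorem append {Γ Γ' Δ Δ' : List Fm} (h : Unfold α β Γ Γ') (k : Unfold α β Δ Δ') :
    Unfold α β (Γ ++ Δ) (Γ' ++ Δ') := by
  induction h with
  | nil => exact k
  | keep x _ ih => exact .keep x ih
  | split _ ih => exact .split ih

theorem append_inv : ∀ {Γ Δ X : List Fm}, Unfold α β (Γ ++ Δ) X →
    ∃ Γ' Δ', X = Γ' ++ Δ' ∧ Unfold α β Γ Γ' ∧ Unfold α β Δ Δ'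
  | [], _, X, h => ⟨[], X, rfl, .nil, h⟩
  | _ :: _, _, _, .keep x h => by
      obtain ⟨Γ', Δ', rfl, h₁, h₂⟩ := append_inv h
      exact ⟨x :: Γ', Δ', rfl, .keep x h₁, h₂⟩
  | _ :: _, _, _, .split h => by
      obtain ⟨Γ', Δ', rfl, h₁, h₂⟩ := append_inv h
      exact ⟨α :: β :: Γ', Δ', rfl, .split h₁, h₂⟩

/-- An entry that is not a product survives every unfolding. -/
theorem mid_inv {Γ Δ X : List Fm} {x : Fm} (h : Unfold α β (Γ ++ x :: Δ) X)
    (hx : ∀ a b, x ≠ .mul a b) :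
    ∃ Γ' Δ', X = Γ' ++ x :: Δ' ∧ Unfold α β Γ Γ' ∧ Unfold α β Δ Δ' := by
  obtain ⟨Γ', Y, rfl, h₁, h₂⟩ := append_inv h
  cases h₂ with
  | keep _ h₂ => exact ⟨Γ', _, rfl, h₁, h₂⟩
  | split _ => exact absurd rfl (hx α β)

theorem flatten_map {ι : Type} {S S' : ι → List Fm} (h : ∀ i, Unfold α β (S i) (S' i)) :
    ∀ p : List ι, Unfold α β (p.map S).flatten (p.map S').flatten
  | [] => .nil
  | i :: p => by simpa using (h i).append (flatten_map h p)

/-- An unfolding of a concatenation of blocks indexed without repetition comes from a family of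
unfoldings of the blocks. -/
theorem flatten_map_inv {ι : Type} [DecidableEq ι] {S : ι → List Fm} :
    ∀ {p : List ι} {X : List Fm}, p.Nodup → Unfold α β (p.map S).flatten X →
      ∃ S' : ι → List Fm, (∀ i, Unfold α β (S i) (S' i)) ∧ X = (p.map S').flatten
  | [], _, _, h => by
      cases h
      exact ⟨S, fun i => refl _, rfl⟩
  | i :: p, X, hp, h => by
      obtain ⟨hi, hp⟩ := List.nodup_cons.1 hp
      rw [List.map_cons, List.flatten_cons] at h
      obtain ⟨Y, Z, rfl, hY, hZ⟩ := append_inv h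
      obtain ⟨S', hS', rfl⟩ := flatten_map_inv hp hZ
      refine ⟨Function.update S' i Y, fun j => ?_, ?_⟩
      · by_cases hj : j = i
        · subst hj; simpa using hY
        · simpa [hj] using hS' j
      · have : p.map (Function.update S' i Y) = p.map S' :=
          List.map_congr_left fun j hj => Function.update_of_ne (fun e : j = i => hi (e ▸ hj)) _ _
        simp [this]

end Unfold

/-- Any selection of occurrences of `α·β` in the antecedent can be unfolded simultaneously without
increasing the height. -/
theorem exists_unfold {R : Set AnRule} {α β : Fm} {Γ : List Fm} {γ : Fm} (π : DTree R Γ γ) :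
    ∀ {X : List Fm}, Unfold α β Γ X → ∃ τ : DTree R X γ, τ.height ≤ π.height := by
  induction π with
  | id n =>
    intro X h
    cases h with
    | keep _ h =>
      cases h
      exact ⟨.id n, le_rfl⟩
  | rule r hr Γ Δ δ Ss _ ih =>
    intro X h
    obtain ⟨Y, Δ', rfl, h, hΔ⟩ := h.append_inv
    obtain ⟨Γ', Z, rfl, hΓ, h⟩ := h.append_inv
    obtain ⟨Ss', hS, rfl⟩ := Unfold.flatten_map_inv (List.nodup_finRange _) h
    choose τ hτ using fun p hp => ih p hp ((hΓ.append (Unfold.flatten_map hS p)).append hΔ)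
    refine ⟨.rule r hr Γ' Δ' δ Ss' τ, ?_⟩
    simp only [DTree.height]
    exact Ordinal.iSup_le fun p => (add_le_add_left (hτ p.1 p.2) 1).trans
      (Ordinal.le_iSup (fun p : {q // q ∈ r.prems} => _ + 1) p)
  | zeroL Γ Δ δ =>
    intro X h
    obtain ⟨Γ', Δ', rfl, hΓ, hΔ⟩ := h.mid_inv (by simp)
    exact ⟨.zeroL Γ' Δ' δ, le_rfl⟩
  | oneR =>
    intro X h
    cases h
    exact ⟨.oneR, le_rfl⟩
  | starR0 δ =>
    intro X h
    cases h
    exact ⟨.starR0 δ, le_rfl⟩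
  | oneL Γ Δ δ _ ih =>
    intro X h
    obtain ⟨Γ', Δ', rfl, hΓ, hΔ⟩ := h.mid_inv (by simp)
    obtain ⟨τ, hτ⟩ := ih (hΓ.append hΔ)
    exact ⟨.oneL _ _ _ τ, add_le_add_left hτ 1⟩
  | meetL0 Γ Δ a b δ _ ih =>
    intro X h
    obtain ⟨Γ', Δ', rfl, hΓ, hΔ⟩ := h.mid_inv (by simp)
    obtain ⟨τ, hτ⟩ := ih (hΓ.append (hΔ.keep a))
    exact ⟨.meetL0 _ _ _ _ _ τ, add_le_add_left hτ 1⟩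
  | meetL1 Γ Δ a b δ _ ih =>
    intro X h
    obtain ⟨Γ', Δ', rfl, hΓ, hΔ⟩ := h.mid_inv (by simp)
    obtain ⟨τ, hτ⟩ := ih (hΓ.append (hΔ.keep b))
    exact ⟨.meetL1 _ _ _ _ _ τ, add_le_add_left hτ 1⟩
  | meetR Γ a b _ _ ih₀ ih₁ =>
    intro X h
    obtain ⟨τ₀, h₀⟩ := ih₀ h
    obtain ⟨τ₁, h₁⟩ := ih₁ h
    exact ⟨.meetR _ _ _ τ₀ τ₁, max_le_max (add_le_add_left h₀ 1) (add_le_add_left h₁ 1)⟩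
  | joinL Γ Δ a b δ _ _ ih₀ ih₁ =>
    intro X h
    obtain ⟨Γ', Δ', rfl, hΓ, hΔ⟩ := h.mid_inv (by simp)
    obtain ⟨τ₀, h₀⟩ := ih₀ (hΓ.append (hΔ.keep a))
    obtain ⟨τ₁, h₁⟩ := ih₁ (hΓ.append (hΔ.keep b))
    exact ⟨.joinL _ _ _ _ _ τ₀ τ₁, max_le_max (add_le_add_left h₀ 1) (add_le_add_left h₁ 1)⟩
  | joinR0 Γ a b _ ih =>
    intro X h
    obtain ⟨τ, hτ⟩ := ih h
    exact ⟨.joinR0 _ _ _ τ, add_le_add_left hτ 1⟩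
  | joinR1 Γ a b _ ih =>
    intro X h
    obtain ⟨τ, hτ⟩ := ih h
    exact ⟨.joinR1 _ _ _ τ, add_le_add_left hτ 1⟩
  | mulL Γ Δ a b δ π ih =>
    intro X h
    obtain ⟨Γ', Y, rfl, hΓ, h⟩ := h.append_inv
    cases h with
    | keep _ hΔ =>
      obtain ⟨τ, hτ⟩ := ih (hΓ.append ((hΔ.keep b).keep a))
      exact ⟨.mulL _ _ _ _ _ τ, add_le_add_left hτ 1⟩
    | split hΔ =>
      -- The principal formula is unfolded: the premise itself already has the required shape.
      obtain ⟨τ, hτ⟩ := ih (hΓ.append ((hΔ.keep _).keep _))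
      exact ⟨τ, hτ.trans (le_self_add : π.height ≤ π.height + 1)⟩
  | mulR Γ Δ a b _ _ ih₀ ih₁ =>
    intro X h
    obtain ⟨Γ', Δ', rfl, hΓ, hΔ⟩ := h.append_inv
    obtain ⟨τ₀, h₀⟩ := ih₀ hΓ
    obtain ⟨τ₁, h₁⟩ := ih₁ hΔ
    exact ⟨.mulR _ _ _ _ τ₀ τ₁, max_le_max (add_le_add_left h₀ 1) (add_le_add_left h₁ 1)⟩
  | ldL Γ Δ Θ a b δ _ _ ih₀ ih₁ =>
    intro X h
    obtain ⟨Y, Θ', rfl, h, hΘ⟩ := h.mid_inv (by simp)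
    obtain ⟨Γ', Δ', rfl, hΓ, hΔ⟩ := h.append_inv
    obtain ⟨τ₀, h₀⟩ := ih₀ hΔ
    obtain ⟨τ₁, h₁⟩ := ih₁ (hΓ.append (hΘ.keep b))
    exact ⟨.ldL _ _ _ _ _ _ τ₀ τ₁, max_le_max (add_le_add_left h₀ 1) (add_le_add_left h₁ 1)⟩
  | ldR Γ a b _ ih =>
    intro X h
    obtain ⟨τ, hτ⟩ := ih (h.keep a)
    exact ⟨.ldR _ _ _ τ, add_le_add_left hτ 1⟩
  | rdL Γ Δ Θ a b δ _ _ ih₀ ih₁ =>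
    intro X h
    obtain ⟨Γ', Y, rfl, hΓ, h⟩ := h.mid_inv (by simp)
    obtain ⟨Δ', Θ', rfl, hΔ, hΘ⟩ := h.append_inv
    obtain ⟨τ₀, h₀⟩ := ih₀ hΔ
    obtain ⟨τ₁, h₁⟩ := ih₁ (hΓ.append (hΘ.keep b))
    exact ⟨.rdL _ _ _ _ _ _ τ₀ τ₁, max_le_max (add_le_add_left h₀ 1) (add_le_add_left h₁ 1)⟩
  | rdR Γ a b _ ih =>
    intro X h
    obtain ⟨τ, hτ⟩ := ih (h.append (.refl [a]))
    exact ⟨.rdR _ _ _ τ, add_le_add_left hτ 1⟩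
  | starR1 Γ Δ δ _ _ ih₀ ih₁ =>
    intro X h
    obtain ⟨Γ', Δ', rfl, hΓ, hΔ⟩ := h.append_inv
    obtain ⟨τ₀, h₀⟩ := ih₀ hΓ
    obtain ⟨τ₁, h₁⟩ := ih₁ hΔ
    exact ⟨.starR1 _ _ _ τ₀ τ₁, max_le_max (add_le_add_left h₀ 1) (add_le_add_left h₁ 1)⟩
  | starLom Γ Δ a δ _ ih =>
    intro X h
    obtain ⟨Γ', Δ', rfl, hΓ, hΔ⟩ := h.mid_inv (by simp)
    choose τ hτ using fun n => ih n ((hΓ.append (.refl _)).append hΔ)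
    refine ⟨.starLom _ _ _ _ τ, ?_⟩
    simp only [DTree.height]
    exact Ordinal.iSup_le fun n => (add_le_add_left (hτ n) 1).trans
      (Ordinal.le_iSup (fun n : ℕ => _ + 1) n)

/-- the rule `·L` is height-preserving invertible in
`ALC^ω + 𝓡`: from a derivation `π` of `Γ, α·β, Δ ⇒ γ` one obtains a
derivation `τ` of `Γ, α, β, Δ ⇒ γ` with `height τ ≤ height π`. -/
theorem statement18 (R : Set AnRule) (Γ Δ : List Fm) (α β γ : Fm)
    (π : DTree R (Γ ++ .mul α β :: Δ) γ) :
    ∃ τ : DTree R (Γ ++ α :: β :: Δ) γ, τ.height ≤ π.height :=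
  exists_unfold π ((Unfold.refl Γ).append (.split (.refl Δ)))
end
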